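/- In the calculus λ_S, Turing's call-by-value fixed-point combinator Θ and Curry's call-by-value fixed-point combinator Δ are contextually equivalent in the relaxed semantics: Θ ≈ Δ. -/

import Mathlib

namespace LambdaS

/-- Terms of the calculus λ_S: variables, λ-abstractions, applications,
the shift operator `S k.t`, and the reset delimiter `⟨t⟩`. -/
inductive Tm : Type
  | var : ℕ → Tm
  | lam : ℕ → Tm → Tm
  | app : Tm → Tm → Tm
  | shift : ℕ → Tm → Tm
  | reset : Tm → Tm
  deriving DecidableEq

/-- A variable fresh for a finite set of variables. -/
def fresh (s : Finset ℕ) : ℕ := if h : s.Nonempty then s.max' h + 1 else 0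

namespace Tm

/-- Free variables. -/
def fv : Tm → Finset ℕ
  | var x => {x}
  | lam x t => fv t \ {x}
  | app t u => fv t ∪ fv u
  | shift k t => fv t \ {k}
  | reset t => fv t

def size : Tm → ℕ
  | var _ => 1
  | lam _ t => size t + 1
  | app t u => size t + size u + 1
  | shift _ t => size t + 1
  | reset t => size t + 1

/-- Renaming of free occurrences of a variable (used for α-renaming with a
fresh target variable). -/
def rename : Tm → ℕ → ℕ → Tm
  | var w, y, z => if w = y then var z else var w
  | lam w t, y, z => if w = y then lam w t else lam w (rename t y z)
  | app t u, y, z => app (rename t y z) (rename u y z)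
  | shift w t, y, z => if w = y then shift w t else shift w (rename t y z)
  | reset t, y, z => reset (rename t y z)

theorem size_rename (t : Tm) (y z : ℕ) : size (rename t y z) = size t := by
  induction t generalizing y z with
  | var w => simp only [rename]; split <;> rfl
  | lam w t ih => simp only [rename]; split <;> simp [size, ih]
  | app t u iht ihu => simp [rename, size, iht, ihu]
  | shift w t ih => simp only [rename]; split <;> simp [size, ih]
  | reset t ih => simp [rename, size, ih]

/-- Capture-avoiding substitution `t{v/x}` of `v` for the free occurrences of
`x` in `t`; bound variables are α-renamed when needed. -/
def subst : Tm → ℕ → Tm → Tm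
  | var w, x, v => if w = x then v else var w
  | lam y t, x, v =>
      if y = x then lam y t
      else if y ∈ fv v then
        lam (fresh (fv v ∪ fv t ∪ {x}))
          (subst (rename t y (fresh (fv v ∪ fv t ∪ {x}))) x v)
      else lam y (subst t x v)
  | app t u, x, v => app (subst t x v) (subst u x v)
  | shift y t, x, v =>
      if y = x then shift y t
      else if y ∈ fv v then
        shift (fresh (fv v ∪ fv t ∪ {x}))
          (subst (rename t y (fresh (fv v ∪ fv t ∪ {x}))) x v)
      else shift y (subst t x v)
  | reset t, x, v => reset (subst t x v)
termination_by t _ _ => size t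
decreasing_by all_goals simp [size_rename, size] <;> omega

end Tm

/-- Values: variables and λ-abstractions. -/
inductive IsValue : Tm → Prop
  | var (x : ℕ) : IsValue (Tm.var x)
  | lam (x : ℕ) (t : Tm) : IsValue (Tm.lam x t)

/-- A term is closed if it has no free variables. -/
def Closed (t : Tm) : Prop := t.fv = ∅

/-- Pure evaluation contexts E ::= □ | v E | E t. -/
inductive ECtx : Type
  | hole : ECtx
  | appR : (v : Tm) → IsValue v → ECtx → ECtx
  | appL : ECtx → Tm → ECtx

def ECtx.plug : ECtx → Tm → Tm
  | .hole, t => t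
  | .appR v _ E, t => Tm.app v (E.plug t)
  | .appL E u, t => Tm.app (E.plug t) u

def ECtx.fv : ECtx → Finset ℕ
  | .hole => ∅
  | .appR v _ E => v.fv ∪ E.fv
  | .appL E u => E.fv ∪ u.fv

/-- Composition of pure contexts: `(E.comp E').plug t = E.plug (E'.plug t)`. -/
def ECtx.comp : ECtx → ECtx → ECtx
  | .hole, E' => E'
  | .appR v hv E, E' => .appR v hv (E.comp E')
  | .appL E u, E' => .appL (E.comp E') u

/-- Evaluation contexts F ::= □ | v F | F t | ⟨F⟩. -/
inductive FCtx : Type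
  | hole : FCtx
  | appR : (v : Tm) → IsValue v → FCtx → FCtx
  | appL : FCtx → Tm → FCtx
  | reset : FCtx → FCtx

def FCtx.plug : FCtx → Tm → Tm
  | .hole, t => t
  | .appR v _ F, t => Tm.app v (F.plug t)
  | .appL F u, t => Tm.app (F.plug t) u
  | .reset F, t => Tm.reset (F.plug t)

def FCtx.fv : FCtx → Finset ℕ
  | .hole => ∅
  | .appR v _ F => v.fv ∪ F.fv
  | .appL F u => F.fv ∪ u.fv
  | .reset F => F.fv

/-- The function `λx.⟨E[x]⟩` representing the captured delimited context `E`,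
where `x` is chosen fresh (in particular `x ∉ fv E`). -/
def contFun (E : ECtx) : Tm :=
  Tm.lam (fresh E.fv) (Tm.reset (E.plug (Tm.var (fresh E.fv))))

/-- Call-by-value reduction →_v of λ_S. -/
inductive Red : Tm → Tm → Prop
  | beta (F : FCtx) (x : ℕ) (t v : Tm) :
      IsValue v →
      Red (F.plug (Tm.app (Tm.lam x t) v)) (F.plug (t.subst x v))
  | capture (F : FCtx) (E : ECtx) (k : ℕ) (t : Tm) :
      Red (F.plug (Tm.reset (E.plug (Tm.shift k t))))
          (F.plug (Tm.reset (t.subst k (contFun E))))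
  | resetVal (F : FCtx) (v : Tm) :
      IsValue v →
      Red (F.plug (Tm.reset v)) (F.plug v)

/-- A stuck term: not a value and unable to reduce. -/
def Stuck (t : Tm) : Prop := ¬ IsValue t ∧ ∀ t', ¬ Red t t'

/-- Normal forms: values and stuck terms. -/
def NormalForm (t : Tm) : Prop := IsValue t ∨ Stuck t

/-- A control-stuck term has the form E[S k.t]. -/
def ControlStuck (t : Tm) : Prop :=
  ∃ (E : ECtx) (k : ℕ) (s : Tm), t = E.plug (Tm.shift k s)

/-- Evaluation: `t ⇓ t'` iff `t →_v* t'` and `t'` is a normal form. -/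
def Evals (t t' : Tm) : Prop := Relation.ReflTransGen Red t t' ∧ NormalForm t'

/-- `t` evaluates to some value. -/
def EvalsToValue (t : Tm) : Prop := ∃ v, Relation.ReflTransGen Red t v ∧ IsValue v

/-- `t` evaluates to some control-stuck term. -/
def EvalsToStuck (t : Tm) : Prop :=
  ∃ s, Relation.ReflTransGen Red t s ∧ ControlStuck s

/-- General contexts C ::= □ | λx.C | t C | C t | S k.C | ⟨C⟩. -/
inductive Ctx : Type
  | hole : Ctx
  | lam : ℕ → Ctx → Ctx
  | appL : Ctx → Tm → Ctx
  | appR : Tm → Ctx → Ctx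
  | shift : ℕ → Ctx → Ctx
  | reset : Ctx → Ctx

def Ctx.plug : Ctx → Tm → Tm
  | .hole, t => t
  | .lam x C, t => Tm.lam x (C.plug t)
  | .appL C u, t => Tm.app (C.plug t) u
  | .appR u C, t => Tm.app u (C.plug t)
  | .shift k C, t => Tm.shift k (C.plug t)
  | .reset C, t => Tm.reset (C.plug t)

def Ctx.fv : Ctx → Finset ℕ
  | .hole => ∅
  | .lam x C => C.fv \ {x}
  | .appL C u => C.fv ∪ u.fv
  | .appR u C => u.fv ∪ C.fv
  | .shift k C => C.fv \ {k}
  | .reset C => C.fv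

/-- Contextual equivalence ≈ for the relaxed semantics (on closed terms):
tests evaluation to values and evaluation to control-stuck terms in every
closed context. -/
def CtxEquiv (t0 t1 : Tm) : Prop :=
  ∀ C : Ctx, C.fv = ∅ →
    (EvalsToValue (C.plug t0) ↔ EvalsToValue (C.plug t1)) ∧
    (EvalsToStuck (C.plug t0) ↔ EvalsToStuck (C.plug t1))

/-- Contextual equivalence ≈_p for the original semantics: tests evaluation to
values of ⟨C[·]⟩ in every closed context C. -/
def CtxEquivP (t0 t1 : Tm) : Prop :=
  ∀ C : Ctx, C.fv = ∅ →
    (EvalsToValue (Tm.reset (C.plug t0)) ↔ EvalsToValue (Tm.reset (C.plug t1)))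

/-- Contextual equivalence ≈_E testing only with closed evaluation contexts. -/
def ECtxEquiv (t0 t1 : Tm) : Prop :=
  ∀ F : FCtx, F.fv = ∅ →
    (EvalsToValue (F.plug t0) ↔ EvalsToValue (F.plug t1)) ∧
    (EvalsToStuck (F.plug t0) ↔ EvalsToStuck (F.plug t1))

/-- Applicative simulation. -/
def IsAppSim (R : Tm → Tm → Prop) : Prop :=
  ∀ t0 t1, R t0 t1 →
    (∀ t0', Red t0 t0' →
      ∃ t1', Relation.ReflTransGen Red t1 t1' ∧ R t0' t1') ∧
    (∀ x t0', t0 = Tm.lam x t0' →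
      ∃ t1', Relation.ReflTransGen Red t1 (Tm.lam x t1') ∧
        ∀ v, IsValue v → Closed v → R (t0'.subst x v) (t1'.subst x v)) ∧
    (∀ (E0 : ECtx) (k : ℕ) (t0' : Tm), t0 = E0.plug (Tm.shift k t0') →
      ∃ (E1 : ECtx) (t1' : Tm),
        Relation.ReflTransGen Red t1 (E1.plug (Tm.shift k t1')) ∧
        ∀ E : ECtx, E.fv = ∅ →
          R (Tm.reset (t0'.subst k (contFun (E.comp E0))))
            (Tm.reset (t1'.subst k (contFun (E.comp E1)))))

/-- Applicative bisimulation. -/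
def IsAppBisim (R : Tm → Tm → Prop) : Prop :=
  IsAppSim R ∧ IsAppSim (fun a b => R b a)

/-- Applicative bisimilarity ≈_app: the largest applicative bisimulation. -/
def AppBisim (t0 t1 : Tm) : Prop := ∃ R, IsAppBisim R ∧ R t0 t1

/-- Simultaneous substitution (used only with closing substitutions mapping
variables to closed values, so no capture can occur). -/
def Tm.msubst : Tm → (ℕ → Tm) → Tm
  | .var x, σ => σ x
  | .lam x t, σ => Tm.lam x (t.msubst (Function.update σ x (Tm.var x)))
  | .app t u, σ => Tm.app (t.msubst σ) (u.msubst σ)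
  | .shift k t, σ => Tm.shift k (t.msubst (Function.update σ k (Tm.var k)))
  | .reset t, σ => Tm.reset (t.msubst σ)

/-- Open extension of a relation on closed terms: relate `t0σ` and `t1σ` for
every substitution σ mapping variables to closed values. -/
def OpenExt (R : Tm → Tm → Prop) (t0 t1 : Tm) : Prop :=
  ∀ σ : ℕ → Tm, (∀ x, IsValue (σ x) ∧ Closed (σ x)) →
    R (t0.msubst σ) (t1.msubst σ)

/-- ω := λx.x x. -/
def omegaTm : Tm := Tm.lam 0 (Tm.app (Tm.var 0) (Tm.var 0))

/-- Ω := ω ω, a diverging term. -/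
def OmegaTm : Tm := Tm.app omegaTm omegaTm


/-- θ := λx.λy. y (λz. x x y z). -/
def thetaTm : Tm :=
  Tm.lam 0 (Tm.lam 1 (Tm.app (Tm.var 1)
    (Tm.lam 2 (Tm.app (Tm.app (Tm.app (Tm.var 0) (Tm.var 0)) (Tm.var 1)) (Tm.var 2)))))

/-- Θ := θ θ, Turing's call-by-value fixed-point combinator. -/
def ThetaTm : Tm := Tm.app thetaTm thetaTm

/-- δ_x := λy. x (λz. y y z), with x the variable 0. -/
def deltaTm : Tm :=
  Tm.lam 1 (Tm.app (Tm.var 0)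
    (Tm.lam 2 (Tm.app (Tm.app (Tm.var 1) (Tm.var 1)) (Tm.var 2))))

/-- Δ := λx. δ_x δ_x, Curry's call-by-value fixed-point combinator. -/
def DeltaTm : Tm := Tm.lam 0 (Tm.app deltaTm deltaTm)

/-!
The two combinators are compared by a bisimulation up to context. Put `Θ' := λy. y (λz. Θ y z)`,
the value of `Θ`, and relate the four pairs of terms
`(Θ, Δ)`, `(Θ', Δ)`, `(Θ x, δ_x δ_x)` and `(Θ' x, δ_x δ_x)`.
For closed values `v` and `w` in the closure of these pairs under the term constructors and under
instantiation of `x`, the terms `Θ v` and `δ_w δ_w` unfold to `v (λz. Θ v z)` and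
`w (λz. δ_w δ_w z)`, which are again in the closure, and all the other reductions of the four pairs
lead from one pair to another. None of these steps captures a context, so the shift operator only
acts on the surrounding terms, and there the closure turns related contexts into related
continuations.
-/

/-! ### Substitution of closed terms -/

namespace Tm

theorem subst_lam_of_closed {v : Tm} (hv : Closed v) (y x : ℕ) (t : Tm) :
    (lam y t).subst x v = if y = x then lam y t else lam y (t.subst x v) := by
  rw [subst, show v.fv = ∅ from hv]
  simp

theorem subst_shift_of_closed {v : Tm} (hv : Closed v) (k x : ℕ) (t : Tm) :
    (shift k t).subst x v = if k = x then shift k t else shift k (t.subst x v) := by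
  rw [subst, show v.fv = ∅ from hv]
  simp

theorem fv_subst_of_closed {v : Tm} (hv : Closed v) (t : Tm) (x : ℕ) :
    (t.subst x v).fv = t.fv \ {x} := by
  have hv' : v.fv = ∅ := hv
  induction t with
  | var y =>
    rw [subst]
    split_ifs with h
    · simp [fv, h, hv']
    · simp [fv, Finset.sdiff_singleton_eq_erase, Ne.symm h]
  | lam y t ih =>
    by_cases h : y = x <;> simp [subst_lam_of_closed hv, fv, h, ih, sdiff_right_comm]
  | app t u iht ihu => simp [subst, fv, iht, ihu, Finset.union_sdiff_distrib]
  | shift k t ih =>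
    by_cases h : k = x <;> simp [subst_shift_of_closed hv, fv, h, ih, sdiff_right_comm]
  | reset t ih => simp [subst, fv, ih]

theorem closed_subst {v t : Tm} {x : ℕ} (hv : Closed v) (ht : t.fv ⊆ {x}) :
    Closed (t.subst x v) := by
  rw [Closed, fv_subst_of_closed hv, Finset.sdiff_eq_empty_iff_subset]
  exact ht

theorem subst_of_notMem_fv {v t : Tm} {x : ℕ} (hv : Closed v) (hx : x ∉ t.fv) :
    t.subst x v = t := by
  induction t with
  | var y =>
    have : y ≠ x := by simpa [fv, eq_comm] using hx
    simp [subst, this]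
  | lam y t ih =>
    simp only [fv, Finset.mem_sdiff, Finset.mem_singleton, not_and_not_right] at hx
    rw [subst_lam_of_closed hv]
    split_ifs with h
    · rfl
    · rw [ih fun hmem => h (hx hmem).symm]
  | app t u iht ihu =>
    simp only [fv, Finset.mem_union, not_or] at hx
    rw [subst, iht hx.1, ihu hx.2]
  | shift k t ih =>
    simp only [fv, Finset.mem_sdiff, Finset.mem_singleton, not_and_not_right] at hx
    rw [subst_shift_of_closed hv]
    split_ifs with h
    · rfl
    · rw [ih fun hmem => h (hx hmem).symm]
  | reset t ih => rw [subst, ih hx]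

theorem subst_of_closed {v t : Tm} (hv : Closed v) (ht : Closed t) (x : ℕ) : t.subst x v = t :=
  subst_of_notMem_fv hv (by simp [show t.fv = ∅ from ht])

end Tm

instance decidableClosed (t : Tm) : Decidable (Closed t) :=
  inferInstanceAs (Decidable (t.fv = ∅))

theorem closed_app {t u : Tm} : Closed (.app t u) ↔ Closed t ∧ Closed u :=
  Finset.union_eq_empty

theorem ECtx.fv_plug (E : ECtx) (t : Tm) : (E.plug t).fv = E.fv ∪ t.fv := by
  induction E with
  | hole => simp [plug, fv]
  | appR v _ E ih => simp [plug, fv, Tm.fv, ih]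
  | appL E u ih => simp only [plug, fv, Tm.fv, ih, Finset.union_right_comm]

theorem Ctx.fv_plug_of_closed (C : Ctx) {t : Tm} (ht : Closed t) : (C.plug t).fv = C.fv := by
  induction C <;> simp_all [plug, fv, Tm.fv, Closed]

/-- Closed values, the terms that reduction substitutes when it starts from a closed term. -/
structure IsClosedValue (v : Tm) : Prop where
  isValue : IsValue v
  closed : Closed v

theorem isClosedValue_contFun {E : ECtx} (hE : E.fv = ∅) : IsClosedValue (contFun E) :=
  ⟨.lam _ _, by simp [Closed, contFun, Tm.fv, ECtx.fv_plug, hE]⟩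

/-! ### Structural reduction -/

/-- Call-by-value reduction in structural style: the evaluation contexts of `Red` become
congruence rules, which makes the relation fit for induction and inversion. -/
inductive Step : Tm → Tm → Prop
  | beta {v : Tm} (x : ℕ) (t : Tm) (hv : IsValue v) : Step (.app (.lam x t) v) (t.subst x v)
  | capture (E : ECtx) (k : ℕ) (t : Tm) :
      Step (.reset (E.plug (.shift k t))) (.reset (t.subst k (contFun E)))
  | resetVal {v : Tm} (hv : IsValue v) : Step (.reset v) v
  | appL {t t' : Tm} (u : Tm) (h : Step t t') : Step (.app t u) (.app t' u)
  | appR {v t t' : Tm} (hv : IsValue v) (h : Step t t') : Step (.app v t) (.app v t')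
  | reset {t t' : Tm} (h : Step t t') : Step (.reset t) (.reset t')

/-- The reflexive and transitive closure of structural reduction. -/
abbrev Steps : Tm → Tm → Prop := Relation.ReflTransGen Step

theorem Step.plug (F : FCtx) {t t' : Tm} (h : Step t t') : Step (F.plug t) (F.plug t') := by
  induction F with
  | hole => exact h
  | appR v hv F ih => exact ih.appR hv
  | appL F u ih => exact ih.appL u
  | reset F ih => exact ih.reset

/-- Composition of evaluation contexts: `(F.comp F').plug t = F.plug (F'.plug t)`. -/
def FCtx.comp : FCtx → FCtx → FCtx
  | .hole, F' => F'
  | .appR v hv F, F' => .appR v hv (F.comp F')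
  | .appL F u, F' => .appL (F.comp F') u
  | .reset F, F' => .reset (F.comp F')

theorem FCtx.plug_comp (F F' : FCtx) (t : Tm) : (F.comp F').plug t = F.plug (F'.plug t) := by
  induction F <;> simp_all [comp, plug]

theorem Red.plug (F : FCtx) {t t' : Tm} (h : Red t t') : Red (F.plug t) (F.plug t') := by
  cases h with
  | beta F' x t v hv => simpa only [FCtx.plug_comp] using Red.beta (F.comp F') x t v hv
  | capture F' E k t => simpa only [FCtx.plug_comp] using Red.capture (F.comp F') E k t
  | resetVal F' v hv => simpa only [FCtx.plug_comp] using Red.resetVal (F.comp F') v hv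

theorem red_iff_step {t t' : Tm} : Red t t' ↔ Step t t' := by
  constructor
  · rintro (⟨F, x, t, v, hv⟩ | ⟨F, E, k, t⟩ | ⟨F, v, hv⟩)
    · exact (Step.beta x t hv).plug F
    · exact (Step.capture E k t).plug F
    · exact (Step.resetVal hv).plug F
  · intro h
    induction h with
    | beta x t hv => exact .beta .hole x t _ hv
    | capture E k t => exact .capture .hole E k t
    | resetVal hv => exact .resetVal .hole _ hv
    | appL u _ ih => exact ih.plug (.appL .hole u)
    | appR hv _ ih => exact ih.plug (.appR _ hv .hole)
    | reset _ ih => exact ih.plug (.reset .hole)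

theorem red_eq_step : Red = Step := by
  ext t t'
  exact red_iff_step

theorem Steps.appL {t t' : Tm} (u : Tm) (h : Steps t t') : Steps (.app t u) (.app t' u) :=
  h.lift (Tm.app · u) fun _ _ => .appL u

theorem Steps.appR {v t t' : Tm} (hv : IsValue v) (h : Steps t t') :
    Steps (.app v t) (.app v t') :=
  h.lift (Tm.app v) fun _ _ => .appR hv

theorem Steps.reset {t t' : Tm} (h : Steps t t') : Steps (.reset t) (.reset t') :=
  h.lift Tm.reset fun _ _ => .reset

theorem Step.closed {t t' : Tm} (h : Step t t') (ht : Closed t) : Closed t' := by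
  induction h with
  | beta x t _ =>
    obtain ⟨hlam, hv⟩ := closed_app.mp ht
    exact Tm.closed_subst hv (Finset.sdiff_eq_empty_iff_subset.mp hlam)
  | capture E k t =>
    simp only [Closed, Tm.fv, ECtx.fv_plug, Finset.union_eq_empty] at ht
    exact Tm.closed_subst (isClosedValue_contFun ht.1).closed
      (Finset.sdiff_eq_empty_iff_subset.mp ht.2)
  | resetVal _ => exact ht
  | appL u _ ih => exact closed_app.mpr ((closed_app.mp ht).imp_left ih)
  | appR _ _ ih => exact closed_app.mpr ((closed_app.mp ht).imp_right ih)
  | reset _ ih => exact ih ht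

theorem Steps.closed {t t' : Tm} (h : Steps t t') (ht : Closed t) : Closed t' := by
  induction h with
  | refl => exact ht
  | tail _ h ih => exact h.closed ih

theorem IsValue.not_step {v t : Tm} (hv : IsValue v) : ¬ Step v t := by
  rintro ⟨⟩ <;> cases hv

theorem IsValue.not_controlStuck {v : Tm} (hv : IsValue v) : ¬ ControlStuck v := by
  rintro ⟨_ | _ | _, k, s, rfl⟩ <;> cases hv

theorem ControlStuck.not_step {t t' : Tm} (ht : ControlStuck t) : ¬ Step t t' := by
  obtain ⟨E, k, s, rfl⟩ := ht
  induction E generalizing t' with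
  | hole => exact nofun
  | appR v hv E ih =>
    intro h
    rw [ECtx.plug] at h
    cases h with
    | beta x t hv' => exact hv'.not_controlStuck ⟨E, k, s, rfl⟩
    | appL _ h => exact hv.not_step h
    | appR _ h => exact ih h
  | appL E u ih =>
    intro h
    rw [ECtx.plug] at h
    generalize ht : E.plug (.shift k s) = t at h
    cases h with
    | beta x t hv' => exact (IsValue.lam x t).not_controlStuck ⟨E, k, s, ht.symm⟩
    | appL _ h => exact ih (ht ▸ h)
    | appR hv _ => exact hv.not_controlStuck ⟨E, k, s, ht.symm⟩

/-- `t` reduces in one step to `t₁` and to no other term. -/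
def StepsUniquely (t t₁ : Tm) : Prop := ∀ t', Step t t' ↔ t' = t₁

theorem StepsUniquely.step {t t₁ : Tm} (h : StepsUniquely t t₁) : Step t t₁ := (h t₁).mpr rfl

theorem stepsUniquely_beta {x : ℕ} {t v t₁ : Tm} (hv : IsValue v) (ht₁ : t.subst x v = t₁) :
    StepsUniquely (.app (.lam x t) v) t₁ := by
  subst ht₁
  refine fun t' => ⟨?_, by rintro rfl; exact .beta x t hv⟩
  rintro (_ | _ | _ | ⟨_, h⟩ | ⟨_, h⟩)
  · rfl
  · exact ((IsValue.lam x t).not_step h).elim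
  · exact (hv.not_step h).elim

theorem StepsUniquely.appL {t t₁ : Tm} (h : StepsUniquely t t₁) (u : Tm) :
    StepsUniquely (.app t u) (.app t₁ u) := by
  refine fun t' => ⟨fun ht => ?_, by rintro rfl; exact h.step.appL u⟩
  cases ht with
  | beta x b _ => exact ((IsValue.lam x b).not_step h.step).elim
  | appL _ ht => rw [(h _).mp ht]
  | appR hv _ => exact (hv.not_step h.step).elim

/-! ### Simulation up to context -/

/-- Every reduction step of `t` is matched by reductions of `u`, ending in `S`-related terms. -/
def Progresses (S : Tm → Tm → Prop) (t u : Tm) : Prop :=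
  ∀ t', Step t t' → ∃ u', Steps u u' ∧ S t' u'

/-- `u` matches the observable behaviour of `t`: its reductions, its applications to closed values
if it is a value, and its control effect if it is control stuck. Captured contexts are compared by
what they do to `S`-related terms. -/
structure Simulates (S : Tm → Tm → Prop) (t u : Tm) : Prop where
  step : Progresses S t u
  value : IsValue t → ∃ u', Steps u u' ∧ IsValue u' ∧ S t u' ∧
    ∀ a b, IsClosedValue a → IsClosedValue b → S a b → Progresses S (.app t a) (.app u' b)
  control : ∀ E k s, t = ECtx.plug E (.shift k s) → ∃ E' s',
    Steps u (ECtx.plug E' (.shift k s')) ∧ S s s' ∧ ∀ a b, S a b → S (E.plug a) (E'.plug b)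

theorem StepsUniquely.progresses {S : Tm → Tm → Prop} {t t₁ u u₁ : Tm} (ht : StepsUniquely t t₁)
    (hu : Steps u u₁) (h : S t₁ u₁) : Progresses S t u := by
  intro t' htt'
  obtain rfl := (ht t').mp htt'
  exact ⟨u₁, hu, h⟩

theorem StepsUniquely.simulates {S : Tm → Tm → Prop} {t t₁ u u₁ : Tm} (ht : StepsUniquely t t₁)
    (hu : Steps u u₁) (h : S t₁ u₁) : Simulates S t u where
  step := ht.progresses hu h
  value hv := (hv.not_step ht.step).elim
  control E k s hE := (ControlStuck.not_step ⟨E, k, s, hE⟩ ht.step).elim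

theorem IsValue.simulates {S : Tm → Tm → Prop} {t u u' : Tm} (ht : IsValue t)
    (hu : Steps u u') (hu' : IsValue u') (h : S t u')
    (happ : ∀ a b, IsClosedValue a → IsClosedValue b → S a b →
      Progresses S (.app t a) (.app u' b)) : Simulates S t u where
  step _ hstep := (ht.not_step hstep).elim
  value _ := ⟨u', hu, hu', h, happ⟩
  control E k s hE := (ht.not_controlStuck ⟨E, k, s, hE⟩).elim

/-- The closure of `R` under the term constructors and under instantiation by related closed values.
The pairs of `R` are terms with at most the variable `0` free, and this is the variable that gets
instantiated. -/
inductive CtxClosure (R : Tm → Tm → Prop) : Tm → Tm → Prop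
  | inst {p q v w : Tm} (h : R p q) (hp : p.fv ⊆ {0}) (hq : q.fv ⊆ {0}) (hv : IsClosedValue v)
      (hw : IsClosedValue w) (hvw : CtxClosure R v w) :
      CtxClosure R (p.subst 0 v) (q.subst 0 w)
  | var (x : ℕ) : CtxClosure R (.var x) (.var x)
  | lam {t u : Tm} (x : ℕ) (h : CtxClosure R t u) : CtxClosure R (.lam x t) (.lam x u)
  | app {t u t' u' : Tm} (h : CtxClosure R t u) (h' : CtxClosure R t' u') :
      CtxClosure R (.app t t') (.app u u')
  | shift {t u : Tm} (k : ℕ) (h : CtxClosure R t u) : CtxClosure R (.shift k t) (.shift k u)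
  | reset {t u : Tm} (h : CtxClosure R t u) : CtxClosure R (.reset t) (.reset u)

/-- `R` is a simulation up to context: the instances of its pairs by related closed values are
simulated, but only with respect to the closure of `R`. -/
def IsSimulationUpToCtx (R : Tm → Tm → Prop) : Prop :=
  ∀ p q v w, R p q → IsClosedValue v → IsClosedValue w → CtxClosure R v w →
    Simulates (CtxClosure R) (p.subst 0 v) (q.subst 0 w)

namespace CtxClosure

variable {R : Tm → Tm → Prop} {t u t' u' : Tm}

theorem refl (t : Tm) : CtxClosure R t t := by
  induction t with
  | var x => exact .var x
  | lam x t ih => exact ih.lam x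
  | app t u iht ihu => exact iht.app ihu
  | shift k t ih => exact ih.shift k
  | reset t ih => exact ih.reset

theorem flip (h : CtxClosure R t u) : CtxClosure (flip R) u t := by
  induction h with
  | inst h hp hq hv hw _ ih => exact .inst h hq hp hw hv ih
  | var x => exact .var x
  | lam x _ ih => exact ih.lam x
  | app _ _ ih ih' => exact ih.app ih'
  | shift k _ ih => exact ih.shift k
  | reset _ ih => exact ih.reset

theorem of_closed (h : R t u) (ht : Closed t) (hu : Closed u) : CtxClosure R t u := by
  have hid : IsClosedValue (.lam 0 (.var 0)) := ⟨.lam _ _, by decide⟩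
  have hinst : CtxClosure R (t.subst 0 (.lam 0 (.var 0))) (u.subst 0 (.lam 0 (.var 0))) :=
    .inst h (by simp [show t.fv = ∅ from ht]) (by simp [show u.fv = ∅ from hu]) hid hid (refl _)
  rwa [Tm.subst_of_closed hid.closed ht, Tm.subst_of_closed hid.closed hu] at hinst

theorem plug (C : Ctx) (h : CtxClosure R t u) : CtxClosure R (C.plug t) (C.plug u) := by
  induction C with
  | hole => exact h
  | lam x C ih => exact ih.lam x
  | appL C s ih => exact ih.app (refl s)
  | appR s C ih => exact (refl s).app ih
  | shift k C ih => exact ih.shift k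
  | reset C ih => exact ih.reset

theorem subst {v w : Tm} (h : CtxClosure R t u) (x : ℕ) (hv : Closed v) (hw : Closed w)
    (hvw : CtxClosure R v w) : CtxClosure R (t.subst x v) (u.subst x w) := by
  induction h with
  | inst h hp hq ha hb hab =>
    rw [Tm.subst_of_closed hv (Tm.closed_subst ha.closed hp),
      Tm.subst_of_closed hw (Tm.closed_subst hb.closed hq)]
    exact .inst h hp hq ha hb hab
  | var y =>
    rw [Tm.subst, Tm.subst]
    split_ifs
    exacts [hvw, .var y]
  | lam y h ih =>
    rw [Tm.subst_lam_of_closed hv, Tm.subst_lam_of_closed hw]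
    split_ifs
    exacts [h.lam y, ih.lam y]
  | app _ _ ih ih' =>
    rw [Tm.subst, Tm.subst]
    exact ih.app ih'
  | shift k h ih =>
    rw [Tm.subst_shift_of_closed hv, Tm.subst_shift_of_closed hw]
    split_ifs
    exacts [h.shift k, ih.shift k]
  | reset _ ih =>
    rw [Tm.subst, Tm.subst]
    exact ih.reset

theorem contFun {E E' : ECtx} (hE : E.fv = ∅) (hE' : E'.fv = ∅)
    (h : ∀ a b, CtxClosure R a b → CtxClosure R (E.plug a) (E'.plug b)) :
    CtxClosure R (contFun E) (contFun E') := by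
  rw [LambdaS.contFun, LambdaS.contFun, hE, hE']
  exact (h _ _ (.var _)).reset.lam _

theorem simulates_var (x : ℕ) : Simulates (CtxClosure R) (.var x) (.var x) := by
  refine (IsValue.var x).simulates .refl (.var x) (.var x) fun a b ha _ _ t' hstep => ?_
  rcases hstep with _ | _ | _ | ⟨_, h⟩ | ⟨_, h⟩
  · exact ((IsValue.var x).not_step h).elim
  · exact (ha.isValue.not_step h).elim

theorem simulates_lam (h : CtxClosure R t u) (x : ℕ) :
    Simulates (CtxClosure R) (.lam x t) (.lam x u) :=
  (IsValue.lam x t).simulates .refl (.lam x u) (h.lam x) fun _ _ ha hb hab =>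
    (stepsUniquely_beta ha.isValue rfl).progresses (.single (.beta x u hb.isValue))
      (h.subst x ha.closed hb.closed hab)

theorem simulates_shift (h : CtxClosure R t u) (k : ℕ) :
    Simulates (CtxClosure R) (.shift k t) (.shift k u) where
  step := nofun
  value := nofun
  control E j s hE := by
    cases E <;> cases hE
    exact ⟨.hole, u, .refl, h, fun _ _ => id⟩

theorem progresses_app (h' : CtxClosure R t' u') (ht' : Closed t') (hu' : Closed u')
    (hs : Simulates (CtxClosure R) t u) (hs' : Simulates (CtxClosure R) t' u') :
    Progresses (CtxClosure R) (.app t t') (.app u u') := by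
  intro r hstep
  cases hstep with
  | beta x b hv =>
    obtain ⟨u₁, hu₁, hu₁v, -, happ⟩ := hs.value (.lam x b)
    obtain ⟨w, hw, hwv, hvw, -⟩ := hs'.value hv
    obtain ⟨r', hr', hrr'⟩ := happ t' w ⟨hv, ht'⟩ ⟨hwv, hw.closed hu'⟩ hvw _ (.beta x b hv)
    exact ⟨r', ((hu₁.appL u').trans (hw.appR hu₁v)).trans hr', hrr'⟩
  | appL _ hstep =>
    obtain ⟨u₁, hu₁, h₁⟩ := hs.step _ hstep
    exact ⟨_, hu₁.appL u', h₁.app h'⟩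
  | appR hv hstep =>
    obtain ⟨u₁, hu₁, hu₁v, h₁, -⟩ := hs.value hv
    obtain ⟨u₁', hu₁', h₁'⟩ := hs'.step _ hstep
    exact ⟨_, (hu₁.appL u').trans (hu₁'.appR hu₁v), h₁.app h₁'⟩

theorem simulates_app (h' : CtxClosure R t' u') (ht' : Closed t') (hu' : Closed u')
    (hs : Simulates (CtxClosure R) t u) (hs' : Simulates (CtxClosure R) t' u') :
    Simulates (CtxClosure R) (.app t t') (.app u u') where
  step := progresses_app h' ht' hu' hs hs'
  value := nofun
  control E k s hE := by
    cases E with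
    | hole => cases hE
    | appR v hv E =>
      cases hE
      obtain ⟨u₁, hu₁, hu₁v, h₁, -⟩ := hs.value hv
      obtain ⟨E', s', hu₁', hss', hplug⟩ := hs'.control E k s rfl
      exact ⟨.appR u₁ hu₁v E', s', (hu₁.appL u').trans (hu₁'.appR hu₁v), hss',
        fun a b hab => h₁.app (hplug a b hab)⟩
    | appL E r =>
      cases hE
      obtain ⟨E', s', hu₁, hss', hplug⟩ := hs.control E k s rfl
      exact ⟨.appL E' u', s', hu₁.appL u', hss', fun a b hab => (hplug a b hab).app h'⟩

theorem simulates_reset (ht : Closed t) (hu : Closed u) (hs : Simulates (CtxClosure R) t u) :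
    Simulates (CtxClosure R) (.reset t) (.reset u) where
  step r hstep := by
    cases hstep with
    | capture E k s =>
      obtain ⟨E', s', hsteps, hss', hplug⟩ := hs.control E k s rfl
      have hu₁ := hsteps.closed hu
      simp only [Closed, ECtx.fv_plug, Finset.union_eq_empty] at ht hu₁
      exact ⟨_, hsteps.reset.tail (.capture E' k s'),
        (hss'.subst k (isClosedValue_contFun ht.1).closed (isClosedValue_contFun hu₁.1).closed
          (contFun ht.1 hu₁.1 hplug)).reset⟩
    | resetVal hv =>
      obtain ⟨w, hw, hwv, hvw, -⟩ := hs.value hv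
      exact ⟨w, hw.reset.tail (.resetVal hwv), hvw⟩
    | reset hstep =>
      obtain ⟨u₁, hu₁, h₁⟩ := hs.step _ hstep
      exact ⟨_, hu₁.reset, h₁.reset⟩
  value := nofun
  control E _ _ hE := by cases E <;> cases hE

end CtxClosure

namespace IsSimulationUpToCtx

variable {R : Tm → Tm → Prop} {t u t' : Tm}

theorem simulates (hR : IsSimulationUpToCtx R) (h : CtxClosure R t u) (ht : Closed t)
    (hu : Closed u) : Simulates (CtxClosure R) t u := by
  induction h with
  | inst h _ _ hv hw hvw => exact hR _ _ _ _ h hv hw hvw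
  | var x => exact CtxClosure.simulates_var x
  | lam x h => exact h.simulates_lam x
  | app _ h' ih ih' =>
    obtain ⟨ht, ht'⟩ := closed_app.mp ht
    obtain ⟨hu, hu'⟩ := closed_app.mp hu
    exact h'.simulates_app ht' hu' (ih ht hu) (ih' ht' hu')
  | shift k h => exact h.simulates_shift k
  | reset _ ih => exact CtxClosure.simulates_reset ht hu (ih ht hu)

theorem exists_steps (hR : IsSimulationUpToCtx R) (h : CtxClosure R t u) (ht : Closed t)
    (hu : Closed u) (hsteps : Steps t t') : ∃ u', Steps u u' ∧ CtxClosure R t' u' := by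
  induction hsteps with
  | refl => exact ⟨u, .refl, h⟩
  | tail hsteps hstep ih =>
    obtain ⟨u₁, hu₁, h₁⟩ := ih
    obtain ⟨u₂, hu₂, h₂⟩ :=
      (hR.simulates h₁ (Steps.closed hsteps ht) (hu₁.closed hu)).step _ hstep
    exact ⟨u₂, hu₁.trans hu₂, h₂⟩

theorem exists_steps_simulates (hR : IsSimulationUpToCtx R) (h : CtxClosure R t u)
    (ht : Closed t) (hu : Closed u) (hsteps : Steps t t') :
    ∃ u', Steps u u' ∧ Simulates (CtxClosure R) t' u' := by
  obtain ⟨u', hu', h'⟩ := hR.exists_steps h ht hu hsteps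
  exact ⟨u', hu', hR.simulates h' (hsteps.closed ht) (hu'.closed hu)⟩

theorem evalsToValue (hR : IsSimulationUpToCtx R) (h : CtxClosure R t u) (ht : Closed t)
    (hu : Closed u) (hval : EvalsToValue t) : EvalsToValue u := by
  rw [EvalsToValue, red_eq_step] at *
  obtain ⟨v, hsteps, hv⟩ := hval
  obtain ⟨u', hu', hs⟩ := hR.exists_steps_simulates h ht hu hsteps
  obtain ⟨w, hw, hwv, -⟩ := hs.value hv
  exact ⟨w, hu'.trans hw, hwv⟩

theorem evalsToStuck (hR : IsSimulationUpToCtx R) (h : CtxClosure R t u) (ht : Closed t)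
    (hu : Closed u) (hstuck : EvalsToStuck t) : EvalsToStuck u := by
  rw [EvalsToStuck, red_eq_step] at *
  obtain ⟨_, hsteps, E, k, s, rfl⟩ := hstuck
  obtain ⟨u', hu', hs⟩ := hR.exists_steps_simulates h ht hu hsteps
  obtain ⟨E', s', hE', -⟩ := hs.control E k s rfl
  exact ⟨_, hu'.trans hE', E', k, s', rfl⟩

theorem ctxEquiv (hR : IsSimulationUpToCtx R) (hR' : IsSimulationUpToCtx (flip R)) (h : R t u)
    (ht : Closed t) (hu : Closed u) : CtxEquiv t u := by
  intro C hC
  have hCt : Closed (C.plug t) := (C.fv_plug_of_closed ht).trans hC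
  have hCu : Closed (C.plug u) := (C.fv_plug_of_closed hu).trans hC
  have hplug := (CtxClosure.of_closed h ht hu).plug C
  exact ⟨⟨hR.evalsToValue hplug hCt hCu, hR'.evalsToValue hplug.flip hCu hCt⟩,
    ⟨hR.evalsToStuck hplug hCt hCu, hR'.evalsToStuck hplug.flip hCu hCt⟩⟩

end IsSimulationUpToCtx

/-! ### The two fixed-point combinators -/

/-- Θ' := λy. y (λz. Θ y z), the value to which Θ reduces. -/
def ThetaVal : Tm :=
  .lam 1 (.app (.var 1) (.lam 2 (.app (.app ThetaTm (.var 1)) (.var 2))))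

/-- δ_v := λy. v (λz. y y z), the instance of `deltaTm` at a closed term `v`. -/
def deltaInst (v : Tm) : Tm :=
  .lam 1 (.app v (.lam 2 (.app (.app (.var 1) (.var 1)) (.var 2))))

/-- v (λz. f z), to which the fixed-point combinators unfold when applied to `v`, with `f` the
fixed point. -/
def fixUnfold (v f : Tm) : Tm := .app v (.lam 2 (.app f (.var 2)))

theorem closed_thetaTm : Closed thetaTm := by decide

theorem closed_ThetaTm : Closed ThetaTm := by decide

theorem isClosedValue_ThetaVal : IsClosedValue ThetaVal := ⟨.lam _ _, by decide⟩

theorem isClosedValue_DeltaTm : IsClosedValue DeltaTm := ⟨.lam _ _, by decide⟩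

theorem closed_deltaInst {v : Tm} (hv : Closed v) : Closed (deltaInst v) := by
  simp only [deltaInst, Closed, Tm.fv, show v.fv = ∅ from hv]
  decide

theorem subst_deltaTm_app {v : Tm} (hv : Closed v) :
    (Tm.app deltaTm deltaTm).subst 0 v = .app (deltaInst v) (deltaInst v) := by
  simp [deltaTm, deltaInst, Tm.subst_lam_of_closed hv, Tm.subst]

theorem stepsUniquely_ThetaTm : StepsUniquely ThetaTm ThetaVal :=
  stepsUniquely_beta (.lam _ _) <| by
    simp [Tm.subst_lam_of_closed closed_thetaTm, Tm.subst, ThetaVal, ThetaTm]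

theorem stepsUniquely_ThetaVal_app {v : Tm} (hv : IsClosedValue v) :
    StepsUniquely (.app ThetaVal v) (fixUnfold v (.app ThetaTm v)) :=
  stepsUniquely_beta hv.isValue <| by
    simp [Tm.subst_lam_of_closed hv.closed, Tm.subst,
      Tm.subst_of_closed hv.closed closed_ThetaTm, fixUnfold]

theorem stepsUniquely_DeltaTm_app {v : Tm} (hv : IsClosedValue v) :
    StepsUniquely (.app DeltaTm v) (.app (deltaInst v) (deltaInst v)) :=
  stepsUniquely_beta hv.isValue (subst_deltaTm_app hv.closed)

theorem stepsUniquely_deltaInst_app {v : Tm} (hv : Closed v) :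
    StepsUniquely (.app (deltaInst v) (deltaInst v))
      (fixUnfold v (.app (deltaInst v) (deltaInst v))) := by
  have hd := closed_deltaInst hv
  exact stepsUniquely_beta (.lam _ _) <| by
    simp [Tm.subst_lam_of_closed hd, Tm.subst, Tm.subst_of_closed hd hv, fixUnfold]

/-- The four pairs of terms that generate the bisimulation between Θ and Δ up to context. The
variable `0` stands for the argument of the combinators, as in `deltaTm`. -/
inductive FixRel : Tm → Tm → Prop
  | Theta : FixRel ThetaTm DeltaTm
  | ThetaVal : FixRel ThetaVal DeltaTm
  | Theta_app : FixRel (.app ThetaTm (.var 0)) (.app deltaTm deltaTm)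
  | ThetaVal_app : FixRel (.app ThetaVal (.var 0)) (.app deltaTm deltaTm)

theorem subst_app_var {f v : Tm} (hv : Closed v) (hf : Closed f) (x : ℕ) :
    (Tm.app f (.var x)).subst x v = .app f v := by
  simp [Tm.subst, Tm.subst_of_closed hv hf]

theorem ctxClosure_ThetaVal : CtxClosure FixRel ThetaVal DeltaTm :=
  .of_closed .ThetaVal isClosedValue_ThetaVal.closed isClosedValue_DeltaTm.closed

section Closure

variable {v w : Tm} (hv : IsClosedValue v) (hw : IsClosedValue w) (hvw : CtxClosure FixRel v w)
include hv hw hvw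

theorem ctxClosure_Theta_app :
    CtxClosure FixRel (.app ThetaTm v) (.app (deltaInst w) (deltaInst w)) := by
  have h := CtxClosure.inst .Theta_app (by decide) (by decide) hv hw hvw
  rwa [subst_app_var hv.closed closed_ThetaTm, subst_deltaTm_app hw.closed] at h

theorem ctxClosure_ThetaVal_app :
    CtxClosure FixRel (.app ThetaVal v) (.app (deltaInst w) (deltaInst w)) := by
  have h := CtxClosure.inst .ThetaVal_app (by decide) (by decide) hv hw hvw
  rwa [subst_app_var hv.closed isClosedValue_ThetaVal.closed, subst_deltaTm_app hw.closed] at h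

theorem ctxClosure_fixUnfold :
    CtxClosure FixRel (fixUnfold v (.app ThetaTm v))
      (fixUnfold w (.app (deltaInst w) (deltaInst w))) :=
  hvw.app (((ctxClosure_Theta_app hv hw hvw).app (.var 2)).lam 2)

end Closure

theorem progresses_ThetaVal_app {v w : Tm} (hv : IsClosedValue v) (hw : IsClosedValue w)
    (hvw : CtxClosure FixRel v w) :
    Progresses (CtxClosure FixRel) (.app ThetaVal v) (.app DeltaTm w) :=
  (stepsUniquely_ThetaVal_app hv).progresses
    (.tail (.single (stepsUniquely_DeltaTm_app hw).step)
      (stepsUniquely_deltaInst_app hw.closed).step)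
    (ctxClosure_fixUnfold hv hw hvw)

theorem progresses_DeltaTm_app {v w : Tm} (hv : IsClosedValue v) (hw : IsClosedValue w)
    (hvw : CtxClosure (flip FixRel) v w) :
    Progresses (CtxClosure (flip FixRel)) (.app DeltaTm v) (.app ThetaVal w) :=
  (stepsUniquely_DeltaTm_app hv).progresses .refl (ctxClosure_ThetaVal_app hw hv hvw.flip).flip

theorem isSimulationUpToCtx_fixRel : IsSimulationUpToCtx FixRel := by
  intro p q v w hpq hv hw hvw
  cases hpq with
  | Theta =>
    rw [Tm.subst_of_closed hv.closed closed_ThetaTm,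
      Tm.subst_of_closed hw.closed isClosedValue_DeltaTm.closed]
    exact stepsUniquely_ThetaTm.simulates .refl ctxClosure_ThetaVal
  | ThetaVal =>
    rw [Tm.subst_of_closed hv.closed isClosedValue_ThetaVal.closed,
      Tm.subst_of_closed hw.closed isClosedValue_DeltaTm.closed]
    exact isClosedValue_ThetaVal.isValue.simulates .refl isClosedValue_DeltaTm.isValue
      ctxClosure_ThetaVal fun _ _ => progresses_ThetaVal_app
  | Theta_app =>
    rw [subst_app_var hv.closed closed_ThetaTm, subst_deltaTm_app hw.closed]
    exact (stepsUniquely_ThetaTm.appL v).simulates .refl (ctxClosure_ThetaVal_app hv hw hvw)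
  | ThetaVal_app =>
    rw [subst_app_var hv.closed isClosedValue_ThetaVal.closed, subst_deltaTm_app hw.closed]
    exact (stepsUniquely_ThetaVal_app hv).simulates
      (.single (stepsUniquely_deltaInst_app hw.closed).step) (ctxClosure_fixUnfold hv hw hvw)

theorem isSimulationUpToCtx_flip_fixRel : IsSimulationUpToCtx (flip FixRel) := by
  intro p q v w hpq hv hw hvw
  have hunfold := (ctxClosure_fixUnfold hw hv hvw.flip).flip
  cases (hpq : FixRel q p) with
  | Theta =>
    rw [Tm.subst_of_closed hw.closed closed_ThetaTm,
      Tm.subst_of_closed hv.closed isClosedValue_DeltaTm.closed]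
    exact isClosedValue_DeltaTm.isValue.simulates (.single stepsUniquely_ThetaTm.step)
      isClosedValue_ThetaVal.isValue ctxClosure_ThetaVal.flip fun _ _ => progresses_DeltaTm_app
  | ThetaVal =>
    rw [Tm.subst_of_closed hw.closed isClosedValue_ThetaVal.closed,
      Tm.subst_of_closed hv.closed isClosedValue_DeltaTm.closed]
    exact isClosedValue_DeltaTm.isValue.simulates .refl isClosedValue_ThetaVal.isValue
      ctxClosure_ThetaVal.flip fun _ _ => progresses_DeltaTm_app
  | Theta_app =>
    rw [subst_app_var hw.closed closed_ThetaTm, subst_deltaTm_app hv.closed]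
    exact (stepsUniquely_deltaInst_app hv.closed).simulates
      (.tail (.single (stepsUniquely_ThetaTm.appL w).step) (stepsUniquely_ThetaVal_app hw).step)
      hunfold
  | ThetaVal_app =>
    rw [subst_app_var hw.closed isClosedValue_ThetaVal.closed, subst_deltaTm_app hv.closed]
    exact (stepsUniquely_deltaInst_app hv.closed).simulates
      (.single (stepsUniquely_ThetaVal_app hw).step) hunfold

/-- Turing's and Curry's call-by-value fixed-point combinators are
contextually equivalent in the relaxed semantics. -/
theorem Theta_ctxEquiv_Delta : CtxEquiv ThetaTm DeltaTm :=
  isSimulationUpToCtx_fixRel.ctxEquiv isSimulationUpToCtx_flip_fixRel .Theta closed_ThetaTm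
    isClosedValue_DeltaTm.closed

end LambdaS
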